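/- The average of the degrees of those irreducible complex characters of SL(2,5) whose degree is not divisible by 3 equals 3; that is, acd_{3'}(SL(2,5)) = 3. -/

import Mathlib

open CategoryTheory

/-- The set of irreducible complex characters of `G`: characters of simple
finite-dimensional complex representations of `G`. -/
noncomputable def IrrChar (G : Type) [Group G] : Set (G → ℂ) :=
  {χ | ∃ V : FDRep ℂ G, Simple V ∧ χ = fun g => V.character g}

/-- The degree of a character, read off from its value at `1`. -/
noncomputable def charDeg {G : Type} [Group G] (χ : G → ℂ) : ℕ :=
  ⌊(χ 1).re⌋₊

/-- The average degree of the irreducible characters of `G` satisfying a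
predicate `p` (with the convention that the average of the empty set is `0`). -/
noncomputable def acdRel (G : Type) [Group G] (p : (G → ℂ) → Prop) : ℝ :=
  (∑ᶠ χ ∈ {χ ∈ IrrChar G | p χ}, (charDeg χ : ℝ)) /
    ({χ ∈ IrrChar G | p χ} : Set (G → ℂ)).ncard

/-- The average character degree of `G`. -/
noncomputable def acd (G : Type) [Group G] : ℝ := acdRel G fun _ => True

/-!
Let `φ` be the golden ratio and `ζ` a fifth root of unity with `ζ + ζ⁻¹ = φ - 1`. Modulo the prime
of `ℤ[ζ]` over `5` we have `ζ ≡ 1`, and the reduction `SL₂(ℤ[ζ]) → SL₂(𝔽₅)` splits: the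
transvections `[1, 1; 0, 1]` and `[1, 0; 1, 1]` lift to `[ζ, 1; 0, ζ⁻¹]` and `[ζ, 0; 1, ζ⁻¹]`. The
resulting two-dimensional representation `ρ` has a character `x` with values in `ℤ[φ]`; let `y` be
the character of its Galois conjugate `ρ'`. The characters of `1`, `ρ`, `ρ'`, `Sym² ρ`, `Sym² ρ'`,
`ρ ⊗ ρ'`, `Sym³ ρ`, `Sym⁴ ρ`, `Sym⁵ ρ` are integral polynomials in `x` and `y`, hence virtual
characters, and they are orthonormal with positive degree, hence irreducible. The squares of their
degrees `1, 2, 2, 3, 3, 4, 4, 5, 6` add up to `120 = |SL(2,5)|`, so there are no others. The six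
degrees prime to `3` have sum `18`.
-/

section Pairing

variable {G : Type*} [Group G] [Fintype G]

/-- The bilinear form `(f, h) ↦ |G|⁻¹ ∑ f(g) h(g⁻¹)` on complex functions on `G`. On
characters it agrees with the Hermitian inner product, as `χ(g⁻¹)` is the conjugate of `χ(g)`. -/
noncomputable def charPairing (G : Type*) [Group G] [Fintype G] :
    LinearMap.BilinForm ℂ (G → ℂ) :=
  (Nat.card G : ℂ)⁻¹ •
    ∑ g, (LinearMap.mul ℂ ℂ).compl₁₂ (LinearMap.proj g) (LinearMap.proj g⁻¹)

lemma charPairing_apply (f h : G → ℂ) :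
    charPairing G f h = (Nat.card G : ℂ)⁻¹ * ∑ g, f g * h g⁻¹ := by
  simp [charPairing, LinearMap.sum_apply]

lemma charPairing_single_one_left [DecidableEq G] (f : G → ℂ) :
    charPairing G (Pi.single 1 (Nat.card G : ℂ)) f = f 1 := by
  simp [charPairing_apply, Pi.single_apply]

end Pairing

section Irreducible

variable {G : Type} [Group G]

lemma charDeg_eq_of_apply_one {χ : G → ℂ} {n : ℕ} (h : χ 1 = n) : charDeg χ = n := by
  simp [charDeg, h]

lemma natCast_charDeg {χ : G → ℂ} (hχ : χ ∈ IrrChar G) : (charDeg χ : ℂ) = χ 1 := by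
  obtain ⟨V, -, rfl⟩ := hχ
  rw [charDeg_eq_of_apply_one V.char_one]
  exact V.char_one.symm

lemma charDeg_pos {χ : G → ℂ} (hχ : χ ∈ IrrChar G) : 0 < charDeg χ := by
  obtain ⟨V, _, rfl⟩ := hχ
  rw [charDeg_eq_of_apply_one V.char_one, Module.finrank_pos_iff]
  by_contra hV
  have := not_nontrivial_iff_subsingleton.1 hV
  exact id_nonzero V (ConcreteCategory.hom_ext _ _ fun _ => Subsingleton.elim _ _)

lemma acdRel_eq_sum_div_card {ι : Type*} [Fintype ι] {θ : ι → G → ℂ}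
    (hinj : Function.Injective θ) (hrange : Set.range θ = IrrChar G) (p : (G → ℂ) → Prop)
    [DecidablePred fun i => p (θ i)] :
    acdRel G p = (∑ i with p (θ i), (charDeg (θ i) : ℝ)) / Finset.card {i | p (θ i)} := by
  have hset : {χ ∈ IrrChar G | p χ} = θ '' ({i | p (θ i)} : Finset ι) := by
    ext χ
    simp only [← hrange, Set.mem_ofPred_eq, Set.mem_range, Set.mem_image, Finset.coe_filter,
      Finset.mem_univ, true_and]
    exact ⟨fun ⟨⟨i, hi⟩, hp⟩ => ⟨i, hi ▸ hp, hi⟩, fun ⟨i, hp, hi⟩ => ⟨⟨i, hi⟩, hi ▸ hp⟩⟩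
  rw [acdRel, hset, finsum_mem_image hinj.injOn, finsum_mem_coe_finset,
    Set.ncard_image_of_injective _ hinj, Set.ncard_coe_finset]

variable [Fintype G]

lemma charPairing_self {χ : G → ℂ} (hχ : χ ∈ IrrChar G) : charPairing G χ χ = 1 := by
  obtain ⟨V, _, rfl⟩ := hχ
  have := invertibleOfNonzero (NeZero.ne (Nat.card G : ℂ))
  simpa [charPairing_apply, Nonempty.intro (Iso.refl V)] using FDRep.char_orthonormal V V

lemma charPairing_of_ne {χ ψ : G → ℂ} (hχ : χ ∈ IrrChar G) (hψ : ψ ∈ IrrChar G) (hne : χ ≠ ψ) :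
    charPairing G χ ψ = 0 := by
  obtain ⟨V, _, rfl⟩ := hχ
  obtain ⟨W, _, rfl⟩ := hψ
  have := invertibleOfNonzero (NeZero.ne (Nat.card G : ℂ))
  have hVW : ¬ Nonempty (V ≅ W) := fun ⟨e⟩ => hne (FDRep.char_iso e)
  simpa [charPairing_apply, hVW] using FDRep.char_orthonormal V W

end Irreducible

section Decomposition

lemma character_eq_add_of_isCompl {k G V : Type*} [Field k] [Monoid G] [AddCommGroup V]
    [Module k V] [FiniteDimensional k V] {ρ : Representation k G V} {σ τ : Subrepresentation ρ}
    (h : IsCompl σ.toSubmodule τ.toSubmodule) :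
    ρ.character = σ.toRepresentation.character + τ.toRepresentation.character := by
  let summand (b : Bool) : Submodule k V := bif b then σ.toSubmodule else τ.toSubmodule
  have hinternal : DirectSum.IsInternal summand :=
    (DirectSum.isInternal_submodule_iff_isCompl summand (i := true) (j := false) (by decide)
      (by ext b; cases b <;> simp)).2 h
  ext g
  have hmaps : ∀ b, Set.MapsTo (ρ g) (summand b) (summand b) :=
    Bool.rec (fun _ hv => τ.apply_mem_toSubmodule g hv) fun _ hv => σ.apply_mem_toSubmodule g hv
  exact (LinearMap.trace_eq_sum_trace_restrict hinternal hmaps).trans (Fintype.sum_bool _)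

lemma isCompl_toSubmodule {k G V : Type*} [Semiring k] [Monoid G] [AddCommMonoid V]
    [Module k V] {ρ : Representation k G V} {σ τ : Subrepresentation ρ} (h : IsCompl σ τ) :
    IsCompl σ.toSubmodule τ.toSubmodule where
  disjoint := disjoint_iff.2 (congrArg Subrepresentation.toSubmodule h.inf_eq_bot)
  codisjoint := codisjoint_iff.2 (congrArg Subrepresentation.toSubmodule h.sup_eq_top)

lemma exists_isCompl_ne_bot_of_not_isIrreducible {k G V : Type*} [Field k] [Monoid G]
    [AddCommGroup V] [Module k V] [Nontrivial V] {ρ : Representation k G V}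
    [ρ.IsSemisimpleRepresentation] (h : ¬ ρ.IsIrreducible) :
    ∃ σ τ : Subrepresentation ρ, IsCompl σ τ ∧ σ ≠ ⊥ ∧ τ ≠ ⊥ := by
  have : Nontrivial (Subrepresentation ρ) :=
    ⟨⊥, ⊤, fun h => bot_ne_top (congrArg Subrepresentation.toSubmodule h)⟩
  obtain ⟨σ, hbot, htop⟩ : ∃ σ : Subrepresentation ρ, σ ≠ ⊥ ∧ σ ≠ ⊤ := by
    by_contra! hcon
    exact h { eq_bot_or_eq_top := fun σ => or_iff_not_imp_left.2 (hcon σ) }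
  obtain ⟨τ, hστ⟩ := exists_isCompl σ
  refine ⟨σ, τ, hστ, hbot, ?_⟩
  rintro rfl
  exact htop (by simpa using hστ.sup_eq_top)

lemma finrank_toSubmodule_lt {k G V : Type*} [Field k] [Monoid G] [AddCommGroup V] [Module k V]
    [FiniteDimensional k V] {ρ : Representation k G V} {σ τ : Subrepresentation ρ}
    (h : IsCompl σ τ) (hτ : τ ≠ ⊥) :
    Module.finrank k σ.toSubmodule < Module.finrank k V := by
  refine Submodule.finrank_lt fun htop => hτ ?_
  have hσ : σ = ⊤ := Subrepresentation.toSubmodule_injective htop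
  simpa [hσ] using h.inf_eq_bot

variable {G : Type} [Group G]

lemma character_mem_irrChar [Finite G] {V : Type} [AddCommGroup V] [Module ℂ V]
    [FiniteDimensional ℂ V] (ρ : Representation ℂ G V) [ρ.IsIrreducible] :
    ρ.character ∈ IrrChar G := by
  have := Fintype.ofFinite G
  have := invertibleOfNonzero (NeZero.ne (Nat.card G : ℂ))
  refine ⟨FDRep.of ρ, (FDRep.simple_iff_char_is_norm_one _).2 ?_, rfl⟩
  have hnorm := Representation.char_orthonormal ρ ρ
  rw [if_pos ⟨Representation.Equiv.refl ρ⟩, inv_mul_eq_one₀ (NeZero.ne _)] at hnorm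
  exact hnorm.symm

lemma character_mem_span_irrChar [Finite G] {V : Type} [AddCommGroup V] [Module ℂ V]
    [FiniteDimensional ℂ V] (ρ : Representation ℂ G V) :
    ρ.character ∈ Submodule.span ℤ (IrrChar G) := by
  induction hn : Module.finrank ℂ V using Nat.strong_induction_on generalizing V with
  | _ n ih =>
    subst hn
    by_cases hirr : ρ.IsIrreducible
    · exact Submodule.subset_span (character_mem_irrChar ρ)
    cases subsingleton_or_nontrivial V with
    | inl =>
      have hzero : ρ.character = 0 := by
        ext g
        simp [Representation.character, Subsingleton.elim (ρ g) 0]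
      exact hzero ▸ zero_mem _
    | inr =>
      obtain ⟨σ, τ, hστ, hσ, hτ⟩ := exists_isCompl_ne_bot_of_not_isIrreducible hirr
      rw [character_eq_add_of_isCompl (isCompl_toSubmodule hστ)]
      exact add_mem (ih _ (finrank_toSubmodule_lt hστ hτ) _ rfl)
        (ih _ (finrank_toSubmodule_lt hστ.symm hσ) _ rfl)

end Decomposition

section VirtualCharacters

variable {G : Type} [Group G] [Finite G]

lemma one_mem_span_irrChar : (1 : G → ℂ) ∈ Submodule.span ℤ (IrrChar G) := by
  have htriv : (Representation.trivial ℂ G ℂ).character = 1 := by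
    ext g
    simp [Representation.character]
  exact htriv ▸ character_mem_span_irrChar _

lemma mul_mem_span_irrChar {f h : G → ℂ} (hf : f ∈ Submodule.span ℤ (IrrChar G))
    (hh : h ∈ Submodule.span ℤ (IrrChar G)) : f * h ∈ Submodule.span ℤ (IrrChar G) := by
  have hmul := Submodule.mul_mem_mul hf hh
  rw [Submodule.span_mul_span] at hmul
  refine Submodule.span_le.2 ?_ hmul
  rintro _ ⟨_, ⟨V, -, rfl⟩, _, ⟨W, -, rfl⟩, rfl⟩
  have htensor := character_mem_span_irrChar (Representation.tprod V.ρ W.ρ)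
  rwa [Representation.char_tensor] at htensor

/-- The ring of virtual characters (generalized characters) of a finite group: the `ℤ`-span of
its irreducible characters. -/
noncomputable def virtualCharacters (G : Type) [Group G] [Finite G] : Subalgebra ℤ (G → ℂ) :=
  (Submodule.span ℤ (IrrChar G)).toSubalgebra one_mem_span_irrChar
    fun _ _ => mul_mem_span_irrChar

lemma character_mem_virtualCharacters {V : Type} [AddCommGroup V] [Module ℂ V]
    [FiniteDimensional ℂ V] (ρ : Representation ℂ G V) : ρ.character ∈ virtualCharacters G :=
  character_mem_span_irrChar ρ

lemma trace_mem_virtualCharacters {n : Type} [Fintype n] [DecidableEq n]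
    (φ : G →* Matrix n n ℂ) : (fun g => (φ g).trace) ∈ virtualCharacters G := by
  have hchar : Representation.character
      ((Matrix.toLinAlgEquiv' : Matrix n n ℂ ≃ₐ[ℂ] _).toAlgHom.toMonoidHom.comp φ) =
        fun g => (φ g).trace := by
    ext g
    exact Matrix.trace_toLin'_eq (φ g)
  exact hchar ▸ character_mem_virtualCharacters _

/-- `|G| δ₁` is the character of the regular representation. -/
lemma single_one_mem_virtualCharacters [DecidableEq G] :
    (Pi.single 1 (Nat.card G : ℂ) : G → ℂ) ∈ virtualCharacters G := by
  have := Fintype.ofFinite G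
  have htrace := trace_mem_virtualCharacters
    ((Matrix.permMatrixHom (R := ℂ)).comp (MulAction.toPermHom G G))
  convert htrace using 1
  ext g
  obtain rfl | hg := eq_or_ne g 1
  · simp only [map_one, Matrix.trace_one, Pi.single_eq_same, Nat.card_eq_fintype_card]
  · have hfixed : Function.fixedPoints (MulAction.toPerm g : Equiv.Perm G) = ∅ :=
      Set.eq_empty_of_forall_notMem fun x hx => hg (mul_eq_right.1 hx)
    rw [Pi.single_eq_of_ne hg]
    exact ((Matrix.trace_permutation _).trans (by simp [hfixed])).symm

end VirtualCharacters

lemma exists_eq_single_of_sum_sq_eq_one {α : Type*} {c : α →₀ ℤ}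
    (h : ∑ a ∈ c.support, c a ^ 2 = 1) :
    ∃ a, c = Finsupp.single a 1 ∨ c = Finsupp.single a (-1) := by
  have hpos : ∀ a ∈ c.support, 1 ≤ c a ^ 2 := fun a ha =>
    Int.one_le_abs (pow_ne_zero 2 (Finsupp.mem_support_iff.1 ha)) |>.trans_eq (abs_sq _)
  have hcard : c.support.card = 1 := by
    refine le_antisymm ?_ (Finset.card_pos.2 (Finset.nonempty_of_sum_ne_zero (h ▸ one_ne_zero)))
    have hle := Finset.card_nsmul_le_sum _ _ _ hpos
    rw [h, nsmul_one] at hle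
    exact_mod_cast hle
  obtain ⟨a, n, hn, rfl⟩ := Finsupp.card_support_eq_one'.1 hcard
  rw [Finsupp.support_single a hn, Finset.sum_singleton, Finsupp.single_eq_same, sq_eq_one_iff] at h
  exact ⟨a, h.imp (congrArg _) (congrArg _)⟩

section Expansion

variable {G : Type} [Group G]

lemma charPairing_sum_left [Fintype G] {c : (G → ℂ) →₀ ℤ} (hc : (c.support : Set _) ⊆ IrrChar G)
    {χ : G → ℂ} (hχ : χ ∈ IrrChar G) :
    charPairing G (c.sum fun ψ n => n • ψ) χ = c χ := by
  rw [Finsupp.sum, map_sum, LinearMap.sum_apply, Finset.sum_eq_single χ]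
  · simp only [map_zsmul, LinearMap.smul_apply, charPairing_self hχ, zsmul_one]
  · intro ψ hψ hne
    simp only [map_zsmul, LinearMap.smul_apply, charPairing_of_ne (hc hψ) hχ hne, smul_zero]
  · intro hχ
    simp [Finsupp.notMem_support_iff.1 hχ]

lemma charPairing_sum_self [Fintype G] {c : (G → ℂ) →₀ ℤ} (hc : (c.support : Set _) ⊆ IrrChar G) :
    charPairing G (c.sum fun χ n => n • χ) (c.sum fun χ n => n • χ) =
      (∑ χ ∈ c.support, c χ ^ 2 : ℤ) := by
  have hcoeff : ∀ χ ∈ c.support,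
      charPairing G (c.sum fun ψ n => n • ψ) (c χ • χ) = (c χ ^ 2 : ℤ) := fun χ hχ => by
    rw [map_zsmul, charPairing_sum_left hc (hc hχ), zsmul_eq_mul, ← Int.cast_mul, sq]
  rw [Int.cast_sum, ← Finset.sum_congr rfl hcoeff, ← map_sum, Finsupp.sum]

lemma mem_irrChar_of_charPairing_self_eq_one [Fintype G] {θ : G → ℂ} (hθ : θ ∈ virtualCharacters G)
    (hnorm : charPairing G θ θ = 1) (hpos : 0 ≤ (θ 1).re) : θ ∈ IrrChar G := by
  obtain ⟨c, hc, rfl⟩ := Submodule.mem_span_set.1 hθ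
  rw [charPairing_sum_self hc] at hnorm
  obtain ⟨χ, rfl | rfl⟩ := exists_eq_single_of_sum_sq_eq_one (by exact_mod_cast hnorm)
  · have hχ : χ ∈ IrrChar G := hc (by simp)
    simpa using hχ
  · have hχ : χ ∈ IrrChar G := hc (by simp)
    have hdeg := charDeg_pos hχ
    rw [Finsupp.sum_single_index (zero_smul ℤ χ), neg_one_smul, Pi.neg_apply,
      ← natCast_charDeg hχ, Complex.neg_re, Complex.natCast_re] at hpos
    exact absurd hpos (by simpa using hdeg.ne')

lemma exists_finset_sum_charDeg_sq (G : Type) [Group G] [Finite G] :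
    ∃ s : Finset (G → ℂ), s = IrrChar G ∧ ∑ χ ∈ s, charDeg χ ^ 2 = Nat.card G := by
  classical
  have := Fintype.ofFinite G
  obtain ⟨c, hc, hreg⟩ := Submodule.mem_span_set.1 (single_one_mem_virtualCharacters (G := G))
  have hcoeff : ∀ χ ∈ IrrChar G, c χ = charDeg χ := fun χ hχ => by
    have hpair := charPairing_sum_left hc hχ
    rw [hreg, charPairing_single_one_left, ← natCast_charDeg hχ] at hpair
    exact_mod_cast hpair.symm
  refine ⟨c.support, hc.antisymm fun χ hχ => ?_, ?_⟩
  · simpa [hcoeff χ hχ] using (charDeg_pos hχ).ne'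
  · have hnorm := charPairing_sum_self hc
    rw [hreg, charPairing_single_one_left, Pi.single_eq_same] at hnorm
    rw [Finset.sum_congr rfl fun χ hχ => by rw [hcoeff χ (hc hχ)]] at hnorm
    exact_mod_cast hnorm.symm

lemma range_eq_irrChar [Finite G] {ι : Type*} [Fintype ι] {θ : ι → G → ℂ}
    (hθ : ∀ i, θ i ∈ IrrChar G) (hinj : Function.Injective θ)
    (hsum : ∑ i, charDeg (θ i) ^ 2 = Nat.card G) : Set.range θ = IrrChar G := by
  obtain ⟨s, hs, hsq⟩ := exists_finset_sum_charDeg_sq G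
  rw [← hs] at hθ ⊢
  have hmap : Finset.univ.map ⟨θ, hinj⟩ ⊆ s := by simpa [Finset.subset_iff] using hθ
  have heq : Finset.univ.map ⟨θ, hinj⟩ = s := by
    by_contra hne
    obtain ⟨χ, hχ, hχθ⟩ := Finset.exists_of_ssubset (hmap.ssubset_of_ne hne)
    have hlt : ∑ χ ∈ Finset.univ.map ⟨θ, hinj⟩, charDeg χ ^ 2 < ∑ χ ∈ s, charDeg χ ^ 2 :=
      Finset.sum_lt_sum_of_subset hmap hχ hχθ (pow_pos (charDeg_pos (hs ▸ hχ)) 2)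
        fun _ _ _ => Nat.zero_le _
    rw [hsq, Finset.sum_map] at hlt
    exact hlt.ne hsum
  simp [← heq]

end Expansion

section QuadraticExtension

open Polynomial

lemma exists_ringHom_comp_algebraMap_eq {S K : Type*} [CommRing S] [Field K] [IsAlgClosed K]
    (σ : S →+* K) (a b : S) :
    ∃ τ : QuadraticAlgebra S a b →+* K, τ.comp (algebraMap S (QuadraticAlgebra S a b)) = σ := by
  let := σ.toAlgebra
  have hdeg : (X ^ 2 - C (σ b) * X - C (σ a)).degree = 2 := by compute_degree!
  obtain ⟨u, hu⟩ := IsAlgClosed.exists_root _ (hdeg.trans_ne two_ne_zero)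
  have hroot : u * u = a • (1 : K) + b • u := by
    rw [Algebra.smul_def, Algebra.smul_def, RingHom.algebraMap_toAlgebra]
    simp only [IsRoot, eval_sub, eval_pow, eval_X, eval_mul, eval_C] at hu
    linear_combination hu
  exact ⟨_, (QuadraticAlgebra.lift ⟨u, hroot⟩).comp_algebraMap⟩

end QuadraticExtension

/-- Polynomials in the traces `x` and `y` of two elements `s`, `t` of `SL₂` whose values are the
traces of `1, s, t, Sym² s, Sym² t, s ⊗ t, Sym³ s, Sym⁴ s, Sym⁵ s`. -/
def symTraces {R : Type*} [CommRing R] (x y : R) : Fin 9 → R :=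
  ![1, x, y, x ^ 2 - 1, y ^ 2 - 1, x * y, x ^ 3 - 2 * x, x ^ 4 - 3 * x ^ 2 + 1,
    x ^ 5 - 4 * x ^ 3 + 3 * x]

lemma map_symTraces {R S : Type*} [CommRing R] [CommRing S] (f : R →+* S) (x y : R) (i : Fin 9) :
    f (symTraces x y i) = symTraces (f x) (f y) i := by
  fin_cases i <;> simp [symTraces, map_ofNat]

/-- The binary icosahedral group `SL(2,5)`. -/
abbrev SL25 : Type := Matrix.SpecialLinearGroup (Fin 2) (ZMod 5)

namespace SL25

open QuadraticAlgebra (omega)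

/-- The ring `ℤ[φ]` of golden integers, where `φ² = 1 + φ`; `star` is its Galois conjugation. -/
abbrev GoldenInt : Type := QuadraticAlgebra ℤ 1 1

/-- The ring `ℤ[ζ]` of integers of the fifth cyclotomic field, as an extension of `ℤ[φ]`:
`ζ² = -1 + (φ - 1) ζ`, since `ζ + ζ⁻¹ = φ - 1`. -/
abbrev CyclotomicInt : Type := QuadraticAlgebra GoldenInt (-1) (omega - 1)

/-- The transvection `[1, 1; 0, 1]`. -/
def upper : SL25 := ⟨!![1, 1; 0, 1], by decide⟩

/-- The transvection `[1, 0; 1, 1]`. -/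
def lower : SL25 := ⟨!![1, 0; 1, 1], by decide⟩

/-- The matrix `[ζ, 1; 0, ζ⁻¹]` of order five, which reduces to `upper` under `ζ ↦ 1`. -/
def upperLift : Matrix.SpecialLinearGroup (Fin 2) CyclotomicInt :=
  ⟨!![omega, 1; 0, ⟨omega - 1, -1⟩], by decide⟩

/-- The matrix `[ζ, 0; 1, ζ⁻¹]` of order five, which reduces to `lower` under `ζ ↦ 1`. -/
def lowerLift : Matrix.SpecialLinearGroup (Fin 2) CyclotomicInt :=
  ⟨!![omega, 0; 1, ⟨omega - 1, -1⟩], by decide⟩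

/-- The word in `u` and `l` that spells `g = [a, b; c, d]` when `u = upper` and `l = lower`: it is
`u ^ ((a - 1) / c) * l ^ c * u ^ ((d - 1) / c)` if `c ≠ 0`, and if `c = 0` it is `l ^ 4` times the
word for `lower * g = [a, b; a, b + d]`. -/
def bruhatWord {M : Type*} [Monoid M] (u l : M) (g : SL25) : M :=
  let word (a c d : ZMod 5) : M := u ^ ((a - 1) * c⁻¹).val * l ^ c.val * u ^ ((d - 1) * c⁻¹).val
  if g 1 0 = 0 then l ^ 4 * word (g 0 0) (g 0 0) (g 0 1 + g 1 1) else word (g 0 0) (g 1 0) (g 1 1)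

lemma bruhatWord_upper_lower : ∀ g, bruhatWord upper lower g = g := by
  decide +kernel

lemma bruhatWord_mem {M : Type*} [Monoid M] {S : Submonoid M} {u l : M} (hu : u ∈ S) (hl : l ∈ S)
    (g : SL25) : bruhatWord u l g ∈ S := by
  unfold bruhatWord
  split_ifs <;> apply_rules [mul_mem, pow_mem]

lemma closure_upper_lower : Submonoid.closure {upper, lower} = ⊤ :=
  eq_top_iff.2 fun g _ => bruhatWord_upper_lower g ▸
    bruhatWord_mem (Submonoid.subset_closure (by simp)) (Submonoid.subset_closure (by simp)) g

lemma bruhatWord_upper_mul : ∀ g, bruhatWord upperLift lowerLift (upper * g) =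
    bruhatWord upperLift lowerLift upper * bruhatWord upperLift lowerLift g := by
  decide +kernel

lemma bruhatWord_lower_mul : ∀ g, bruhatWord upperLift lowerLift (lower * g) =
    bruhatWord upperLift lowerLift lower * bruhatWord upperLift lowerLift g := by
  decide +kernel

/-- The homomorphism `SL(2,5) → SL₂(ℤ[ζ])` splitting the reduction modulo the prime over `5`. -/
def lift : SL25 →* Matrix.SpecialLinearGroup (Fin 2) CyclotomicInt :=
  MonoidHom.ofClosureMEqTopLeft (bruhatWord upperLift lowerLift) closure_upper_lower
    (by decide +kernel) (by
      rintro _ (rfl | rfl)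
      exacts [bruhatWord_upper_mul, bruhatWord_lower_mul])

/-- The character of the two-dimensional representation `lift`, as an element of `ℤ[φ]`: by
`trace_lift` the component `re` over `ℤ[φ]` loses nothing. -/
def goldenTrace (g : SL25) : GoldenInt :=
  (lift g).1.trace.re

lemma trace_lift : ∀ g, (lift g).1.trace = algebraMap GoldenInt _ (goldenTrace g) := by
  decide +kernel

lemma goldenTrace_one : goldenTrace 1 = 2 := by
  decide +kernel

lemma goldenTrace_inv (g : SL25) : goldenTrace g⁻¹ = goldenTrace g := by
  simp [goldenTrace, Matrix.SpecialLinearGroup.coe_inv, Matrix.trace_fin_two, add_comm,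
    Matrix.adjugate_fin_two]

lemma map_goldenTrace : (Finset.univ : Finset SL25).val.map goldenTrace =
    {2} + {-2} + .replicate 30 0 + .replicate 20 1 + .replicate 20 (-1) + .replicate 12 omega +
      .replicate 12 (-omega) + .replicate 12 (omega - 1) + .replicate 12 (1 - omega) := by
  decide +kernel

lemma sum_comp_goldenTrace {M : Type*} [AddCommMonoid M] (f : GoldenInt → M) :
    ∑ g, f (goldenTrace g) = f 2 + f (-2) + 30 • f 0 + 20 • f 1 + 20 • f (-1) + 12 • f omega +
      12 • f (-omega) + 12 • f (omega - 1) + 12 • f (1 - omega) := by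
  have hsum := congrArg (fun s => (s.map f).sum) map_goldenTrace
  simpa only [Finset.sum_eq_multiset_sum, Multiset.map_map, Function.comp_apply, Multiset.map_add,
    Multiset.map_singleton, Multiset.map_replicate, Multiset.sum_add, Multiset.sum_singleton,
    Multiset.sum_replicate] using hsum

/-- The value at a group element of trace `x` of the `i`-th irreducible character; the second
two-dimensional character is the Galois conjugate of the first. -/
def charTable (x : GoldenInt) : Fin 9 → GoldenInt :=
  symTraces x (star x)

lemma sum_charTable_mul_charTable : ∀ i j,
    ∑ g, charTable (goldenTrace g) i * charTable (goldenTrace g) j = if i = j then 120 else 0 := by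
  intro i j
  rw [sum_comp_goldenTrace fun x => charTable x i * charTable x j]
  revert i j
  decide +kernel

/-- The degrees of the irreducible characters, in the order of `symTraces`. -/
def degree : Fin 9 → ℕ :=
  ![1, 2, 2, 3, 3, 4, 4, 5, 6]

lemma charTable_two : ∀ i, charTable 2 i = degree i := by
  decide +kernel

variable (σ : GoldenInt →+* ℂ)

/-- The irreducible characters of `SL(2,5)`, for a choice of embedding `σ` of `ℤ[φ]` in `ℂ`. -/
noncomputable def irr (i : Fin 9) (g : SL25) : ℂ :=
  σ (charTable (goldenTrace g) i)

lemma irr_one (i : Fin 9) : irr σ i 1 = degree i := by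
  rw [irr, goldenTrace_one, charTable_two, map_natCast]

lemma charDeg_irr (i : Fin 9) : charDeg (irr σ i) = degree i :=
  charDeg_eq_of_apply_one (irr_one σ i)

lemma map_goldenTrace_mem_virtualCharacters :
    (fun g => σ (goldenTrace g)) ∈ virtualCharacters SL25 := by
  obtain ⟨τ, hτ⟩ := exists_ringHom_comp_algebraMap_eq σ (-1) (omega - 1)
  let matrixRep : SL25 →* Matrix (Fin 2) (Fin 2) ℂ :=
    ((Units.coeHom _).comp Matrix.SpecialLinearGroup.toGL).comp
      ((Matrix.SpecialLinearGroup.map τ).comp lift)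
  have htrace : (fun g => σ (goldenTrace g)) = fun g => (matrixRep g).trace := by
    ext g
    rw [← hτ, RingHom.comp_apply, ← trace_lift]
    exact AddMonoidHom.map_trace τ _
  exact htrace ▸ trace_mem_virtualCharacters matrixRep

lemma irr_mem_virtualCharacters (i : Fin 9) : irr σ i ∈ virtualCharacters SL25 := by
  let x : virtualCharacters SL25 := ⟨_, map_goldenTrace_mem_virtualCharacters σ⟩
  let y : virtualCharacters SL25 :=
    ⟨_, map_goldenTrace_mem_virtualCharacters (σ.comp (starRingEnd GoldenInt))⟩
  have hval : irr σ i = symTraces x y i := by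
    ext g
    have heval := map_symTraces
      ((Pi.evalRingHom (fun _ => ℂ) g).comp (virtualCharacters SL25).val.toRingHom) x y i
    exact (map_symTraces σ _ _ i).trans heval.symm
  exact hval ▸ (symTraces x y i).2

lemma natCard : Nat.card SL25 = 120 := by
  rw [Nat.card_eq_fintype_card, Fintype.card_eq_sum_ones]
  exact sum_comp_goldenTrace fun _ => 1

lemma charPairing_irr (i j : Fin 9) :
    charPairing SL25 (irr σ i) (irr σ j) = if i = j then 1 else 0 := by
  simp only [charPairing_apply, irr, goldenTrace_inv, ← map_mul, ← map_sum,
    sum_charTable_mul_charTable, natCard]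
  split_ifs <;> simp [map_ofNat]

lemma irr_injective : Function.Injective (irr σ) := fun i j hij => by
  have hpair := charPairing_irr σ i j
  rw [hij, charPairing_irr, if_pos rfl] at hpair
  exact of_not_not fun hne => one_ne_zero (hpair.trans (if_neg hne))

lemma irr_mem_irrChar (i : Fin 9) : irr σ i ∈ IrrChar SL25 := by
  refine mem_irrChar_of_charPairing_self_eq_one (irr_mem_virtualCharacters σ i) ?_ ?_
  · rw [charPairing_irr, if_pos rfl]
  · rw [irr_one, Complex.natCast_re]
    exact Nat.cast_nonneg _

lemma range_irr : Set.range (irr σ) = IrrChar SL25 := by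
  refine range_eq_irrChar (irr_mem_irrChar σ) (irr_injective σ) ?_
  simp only [charDeg_irr, natCard]
  decide

end SL25

/-- The average of the degrees of the irreducible characters of `SL(2,5)` of
degree not divisible by `3` equals `3`. -/
theorem acd_three_prime_SL25 :
    acdRel (Matrix.SpecialLinearGroup (Fin 2) (ZMod 5))
      (fun χ => ¬ 3 ∣ charDeg χ) = 3 := by
  obtain ⟨σ, -⟩ := exists_ringHom_comp_algebraMap_eq (Int.castRingHom ℂ) 1 1
  have hsum : ∑ i with ¬ 3 ∣ SL25.degree i, SL25.degree i = 18 := by decide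
  have hcard : Finset.card {i | ¬ 3 ∣ SL25.degree i} = 6 := by decide
  rw [acdRel_eq_sum_div_card (SL25.irr_injective σ) (SL25.range_irr σ)]
  simp only [SL25.charDeg_irr, ← Nat.cast_sum, hsum, hcard]
  norm_num
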